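/- For all x, y, z ∈ 𝓡, (x ⊗ y) ⊗ z ∼ x ⊗ (y ⊗ z). -/

import Mathlib

/-- The ambient space `𝓡` of decimal representations: an integer part together
with a sequence of digits in `{0,…,9}`. -/
abbrev DecimalRep := ℤ × (ℕ → Fin 10)

namespace DecimalRep

open scoped Classical

/-- The truncation `[x]_k = x₀ + ∑_{i=1}^k x_i / 10^i` of `x` up to the `k`-th
digit, as a rational number. -/
def trunc (x : DecimalRep) (k : ℕ) : ℚ :=
  (x.1 : ℚ) + ∑ i ∈ Finset.range k, ((x.2 i : ℕ) : ℚ) / 10 ^ (i + 1)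

/-- The order `⪯` on `𝓡`: `x ⪯ y` iff every truncation of `x` is at most the
corresponding truncation of `y`. -/
def le (x y : DecimalRep) : Prop := ∀ k : ℕ, trunc x k ≤ trunc y k

/-- The strict order `≺` on `𝓡`. -/
def lt (x y : DecimalRep) : Prop := le x y ∧ x ≠ y

/-- Two decimal representations are equivalent ("have no gap") iff there is no
third element lying between them. -/
def equiv (x y : DecimalRep) : Prop :=
  ¬ ∃ z : DecimalRep, z ≠ x ∧ z ≠ y ∧
      ((le x z ∧ le z y) ∨ (le y z ∧ le z x))

/-- `𝓡₉`: decimal representations ending in an infinite string of nines. -/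
def allNines (x : DecimalRep) : Prop := ∃ N : ℕ, ∀ k ≥ N, x.2 k = 9

/-- `ℚ_F`: decimal representations ending in an infinite string of zeros. -/
def finiteDec (x : DecimalRep) : Prop := ∃ N : ℕ, ∀ k ≥ N, x.2 k = 0

/-- The decimal expansion map `ι : ℚ → 𝓡`, satisfying
`[ι(α)]_k = ⌊10^k·α⌋/10^k` for all `k`. -/
def iota (α : ℚ) : DecimalRep :=
  (⌊α⌋, fun k => ⟨(⌊α * 10 ^ (k + 1)⌋ % 10).toNat, by
    have h1 : (0 : ℤ) ≤ ⌊α * 10 ^ (k + 1)⌋ % 10 := Int.emod_nonneg _ (by norm_num)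
    have h2 : ⌊α * 10 ^ (k + 1)⌋ % 10 < 10 := Int.emod_lt_of_pos _ (by norm_num)
    omega⟩)

/-- `M` is a least upper bound of `W` in `(𝓡,⪯)`. -/
def IsLub (W : Set DecimalRep) (M : DecimalRep) : Prop :=
  (∀ w ∈ W, le w M) ∧ ∀ M' : DecimalRep, (∀ w ∈ W, le w M') → le M M'

/-- `M` is a greatest lower bound of `W` in `(𝓡,⪯)`. -/
def IsGlb (W : Set DecimalRep) (M : DecimalRep) : Prop :=
  (∀ w ∈ W, le M w) ∧ ∀ M' : DecimalRep, (∀ w ∈ W, le M' w) → le M' M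

/-- The least upper bound of a set in `(𝓡,⪯)` (junk value if none exists). -/
noncomputable def sup (W : Set DecimalRep) : DecimalRep :=
  if h : ∃ M, IsLub W M then h.choose else default

/-- The greatest lower bound of a set in `(𝓡,⪯)` (junk value if none exists). -/
noncomputable def inf (W : Set DecimalRep) : DecimalRep :=
  if h : ∃ M, IsGlb W M then h.choose else default

/-- Addition `x ⊕ y := sup {ι([x]_k + [y]_k) : k ∈ ℕ}` on `𝓡`. -/
noncomputable def add (x y : DecimalRep) : DecimalRep :=
  sup { z | ∃ k : ℕ, z = iota (trunc x k + trunc y k) }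

/-- The "additive inverse" map `Ψ(x₀.x₁x₂⋯) = (−1−x₀).(9−x₁)(9−x₂)⋯`. -/
def psi (x : DecimalRep) : DecimalRep :=
  (-1 - x.1, fun k => ⟨9 - (x.2 k).val, by have := (x.2 k).isLt; omega⟩)

/-- The signal map: `0` on the nonnegative part, `1` on the negative part. -/
noncomputable def sign (x : DecimalRep) : ℕ :=
  if le (iota 0) x then 0 else 1

/-- The absolute value `‖x‖ := max {x, Ψ(x)}` with respect to `⪯`. -/
noncomputable def norm (x : DecimalRep) : DecimalRep :=
  if le x (psi x) then psi x else x

/-- Multiplication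
`x ⊗ y := Ψ^(sign x + sign y) (sup {ι([‖x‖]_k · [‖y‖]_k) : k ∈ ℕ})` on `𝓡`. -/
noncomputable def mul (x y : DecimalRep) : DecimalRep :=
  psi^[sign x + sign y]
    (sup { z | ∃ k : ℕ, z = iota (trunc (norm x) k * trunc (norm y) k) })

/-- The multiplicative inverse
`x⁻¹ := Ψ^(sign x) (inf {ι(1/[‖x‖]_k) : k ∈ ℕ, [‖x‖]_k > 0})`. -/
noncomputable def inv (x : DecimalRep) : DecimalRep :=
  psi^[sign x]
    (inf { z | ∃ k : ℕ, 0 < trunc (norm x) k ∧ z = iota (1 / trunc (norm x) k) })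

/-- A sequence of rationals is Cauchy. -/
def IsCauchy (x : ℕ → ℚ) : Prop :=
  ∀ ε : ℚ, 0 < ε → ∃ N : ℕ, ∀ m n : ℕ, N ≤ m → N ≤ n → |x m - x n| < ε

/-- The upper limit `inf { sup {f k : k ≥ n} : n ∈ ℕ }` of a sequence in `𝓡`. -/
noncomputable def upperLimit (f : ℕ → DecimalRep) : DecimalRep :=
  inf { z | ∃ n : ℕ, z = sup { w | ∃ k : ℕ, n ≤ k ∧ w = f k } }

/-- The lower limit `sup { inf {f k : k ≥ n} : n ∈ ℕ }` of a sequence in `𝓡`. -/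
noncomputable def lowerLimit (f : ℕ → DecimalRep) : DecimalRep :=
  sup { z | ∃ n : ℕ, z = inf { w | ∃ k : ℕ, n ≤ k ∧ w = f k } }

end DecimalRep

namespace DecimalRep

open Filter Topology

lemma trunc_succ (x : DecimalRep) (k : ℕ) :
    trunc x (k + 1) = trunc x k + ((x.2 k : ℕ) : ℚ) / 10 ^ (k + 1) := by
  simp [trunc, Finset.sum_range_succ, add_assoc]

lemma trunc_zero (x : DecimalRep) : trunc x 0 = x.1 := by simp [trunc]

lemma trunc_mono (x : DecimalRep) : Monotone (trunc x) := by
  apply monotone_nat_of_le_succ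
  intro k
  rw [trunc_succ]
  have : (0 : ℚ) ≤ ((x.2 k : ℕ) : ℚ) / 10 ^ (k + 1) := by positivity
  linarith

lemma trunc_anti (x : DecimalRep) : Antitone (fun k => trunc x k + 1 / 10 ^ k) := by
  apply antitone_nat_of_succ_le
  intro k
  rw [trunc_succ]
  have h : ((x.2 k : ℕ) : ℚ) ≤ 9 := by
    have := (x.2 k).isLt
    exact_mod_cast (by omega : (x.2 k : ℕ) ≤ 9)
  have h2 : ((x.2 k : ℕ) : ℚ) / 10 ^ (k + 1) ≤ 9 / 10 ^ (k + 1) := by gcongr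
  have h3 : (1 : ℚ) / 10 ^ k = 9 / 10 ^ (k + 1) + 1 / 10 ^ (k + 1) := by
    rw [pow_succ]; field_simp; norm_num
  linarith

lemma trunc_lt (x : DecimalRep) (j k : ℕ) : trunc x j < trunc x k + 1 / 10 ^ k := by
  have h1 := trunc_mono x (le_max_left j k)
  have h2 := trunc_anti x (le_max_right j k)
  have h3 : (0 : ℚ) < 1 / 10 ^ (max j k) := by positivity
  simp only at h2
  linarith

lemma trunc_int (x : DecimalRep) (k : ℕ) : ∃ m : ℤ, trunc x k = m / 10 ^ k := by
  induction k with
  | zero => exact ⟨x.1, by simp [trunc]⟩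
  | succ k ih =>
    obtain ⟨m, hm⟩ := ih
    refine ⟨10 * m + (x.2 k : ℕ), ?_⟩
    rw [trunc_succ, hm]
    push_cast
    rw [pow_succ]; field_simp

lemma trunc_inj {x y : DecimalRep} (h : ∀ k, trunc x k = trunc y k) : x = y := by
  apply Prod.ext
  · have := h 0
    simpa [trunc] using this
  · funext k
    have h1 := h (k + 1)
    rw [trunc_succ, trunc_succ, h k, add_right_inj] at h1
    have h2 : (0 : ℚ) < 10 ^ (k + 1) := by positivity
    rw [div_left_inj' h2.ne'] at h1
    exact Fin.ext (by exact_mod_cast h1)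

lemma exists_gap {x y : DecimalRep} (h : le x y) (hne : x ≠ y) :
    ∃ k, trunc x k + 1 / 10 ^ k ≤ trunc y k := by
  by_contra hc
  push Not at hc
  apply hne
  apply trunc_inj
  intro k
  have h1 := hc k
  have h2 := h k
  obtain ⟨m, hm⟩ := trunc_int x k
  obtain ⟨n, hn⟩ := trunc_int y k
  rw [hm, hn] at h1 h2 ⊢
  have hp : (0 : ℚ) < 10 ^ k := by positivity
  rw [← add_div, div_lt_div_iff_of_pos_right hp] at h1
  rw [div_le_div_iff_of_pos_right hp] at h2
  have h1' : n < m + 1 := by exact_mod_cast h1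
  have h2' : m ≤ n := by exact_mod_cast h2
  rw [show m = n by omega]

lemma castR (b : ℚ) (k : ℕ) : ((b + 1 / 10 ^ k : ℚ) : ℝ) = b + 1 / 10 ^ k := by
  push_cast; rfl

/-- the real value -/
noncomputable def val (x : DecimalRep) : ℝ := ⨆ k, (trunc x k : ℝ)

lemma bdd (x : DecimalRep) : BddAbove (Set.range fun k => (trunc x k : ℝ)) := by
  refine ⟨((trunc x 0 + 1 / 10 ^ 0 : ℚ) : ℝ), ?_⟩
  rintro _ ⟨k, rfl⟩
  exact Rat.cast_le.2 (trunc_lt x k 0).le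

lemma le_val (x : DecimalRep) (k : ℕ) : (trunc x k : ℝ) ≤ val x := le_ciSup (bdd x) k

lemma val_le (x : DecimalRep) (k : ℕ) : val x ≤ trunc x k + 1 / 10 ^ k := by
  apply ciSup_le
  intro j
  rw [← castR]
  exact Rat.cast_le.2 (trunc_lt x j k).le

lemma tendsto_trunc (x : DecimalRep) :
    Tendsto (fun k => (trunc x k : ℝ)) atTop (𝓝 (val x)) := by
  apply tendsto_atTop_ciSup _ (bdd x)
  intro a b h
  exact Rat.cast_le.2 (trunc_mono x h)

lemma val_mono {x y : DecimalRep} (h : le x y) : val x ≤ val y := by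
  apply ciSup_le
  intro j
  exact le_trans (by exact_mod_cast h j) (le_val y j)

lemma no_between {x y z : DecimalRep} (h : val x = val y) (h1 : le x z) (h2 : le z y)
    (n1 : z ≠ x) (n2 : z ≠ y) : False := by
  obtain ⟨k, hk⟩ := exists_gap h1 n1.symm
  obtain ⟨j, hj⟩ := exists_gap h2 n2
  have a1 := val_le x k
  have a2 := le_val y j
  have hk' : (trunc x k : ℝ) + 1 / 10 ^ k ≤ trunc z k := by
    rw [← castR]; exact Rat.cast_le.2 hk
  have hj' : (trunc z j : ℝ) + 1 / 10 ^ j ≤ trunc y j := by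
    rw [← castR]; exact Rat.cast_le.2 hj
  have a3 : (trunc z k : ℝ) < trunc z j + 1 / 10 ^ j := by
    rw [← castR]; exact Rat.cast_lt.2 (trunc_lt z k j)
  linarith

lemma equiv_of_val {x y : DecimalRep} (h : val x = val y) : equiv x y := by
  rintro ⟨z, n1, n2, ⟨h1, h2⟩ | ⟨h1, h2⟩⟩
  · exact no_between h h1 h2 n1 n2
  · exact no_between h.symm h1 h2 n2 n1

lemma trunc_psi (x : DecimalRep) (k : ℕ) : trunc (psi x) k = -trunc x k - 1 / 10 ^ k := by
  induction k with
  | zero => simp [trunc, psi]; ring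
  | succ k ih =>
    rw [trunc_succ, trunc_succ, ih]
    have h : (((psi x).2 k : ℕ) : ℚ) = 9 - ((x.2 k : ℕ) : ℚ) := by
      have := (x.2 k).isLt
      simp only [psi]
      rw [Nat.cast_sub (by omega)]; norm_num
    rw [h, pow_succ]; field_simp; ring

lemma val_psi (x : DecimalRep) : val (psi x) = - val x := by
  have h1 := tendsto_trunc (psi x)
  have h0 : Tendsto (fun k : ℕ => (1 : ℝ) / 10 ^ k) atTop (𝓝 0) := by
    have := tendsto_pow_atTop_nhds_zero_of_lt_one (r := (1 / 10 : ℝ)) (by norm_num) (by norm_num)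
    simpa [div_pow] using this
  have h2 := (tendsto_trunc x).neg.sub h0
  rw [sub_zero] at h2
  refine tendsto_nhds_unique h1 (h2.congr ?_)
  intro k
  rw [trunc_psi]; push_cast; rfl

lemma val_psi_iter (m : ℕ) (x : DecimalRep) : val (psi^[m] x) = (-1) ^ m * val x := by
  induction m with
  | zero => simp
  | succ m ih => rw [Function.iterate_succ_apply', val_psi, ih, pow_succ]; ring

/-- decimal from consistent scaled truncations -/
def mk' (T : ℕ → ℤ) : DecimalRep :=
  (T 0, fun k => ⟨(T (k + 1) % 10).toNat, by omega⟩)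

lemma trunc_mk' (T : ℕ → ℤ) (hT : ∀ n, T (n + 1) / 10 = T n) (k : ℕ) :
    trunc (mk' T) k = T k / 10 ^ k := by
  induction k with
  | zero => simp [trunc, mk']
  | succ k ih =>
    rw [trunc_succ, ih]
    have h : ((((mk' T).2 k : ℕ) : ℤ)) = T (k + 1) - 10 * T k := by
      have := hT k
      simp only [mk']
      omega
    have h' : (((mk' T).2 k : ℕ) : ℚ) = T (k + 1) - 10 * T k := by exact_mod_cast h
    rw [h', pow_succ]; field_simp; ring

lemma floor_step (α : ℚ) (n : ℕ) : ⌊α * 10 ^ (n + 1)⌋ / 10 = ⌊α * 10 ^ n⌋ := by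
  have := Int.floor_div_natCast (α * 10 ^ (n + 1)) 10
  have h2 : α * 10 ^ (n + 1) / ((10 : ℕ) : ℚ) = α * 10 ^ n := by
    rw [pow_succ]; push_cast; field_simp
  rw [h2] at this
  rw [this]; norm_num

lemma trunc_iota (α : ℚ) (k : ℕ) : trunc (iota α) k = (⌊α * 10 ^ k⌋ : ℤ) / 10 ^ k := by
  have h : iota α = mk' (fun n => ⌊α * 10 ^ n⌋) := by
    simp [iota, mk']
  rw [h, trunc_mk' _ (floor_step α)]

lemma trunc_iota_le (α : ℚ) (k : ℕ) : trunc (iota α) k ≤ α := by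
  rw [trunc_iota, div_le_iff₀ (by positivity)]
  exact Int.floor_le _

lemma le_val_iota (α : ℚ) : (α : ℝ) ≤ val (iota α) := by
  have h0 : Tendsto (fun k : ℕ => (1 : ℝ) / 10 ^ k) atTop (𝓝 0) := by
    have := tendsto_pow_atTop_nhds_zero_of_lt_one (r := (1 / 10 : ℝ)) (by norm_num) (by norm_num)
    simpa [div_pow] using this
  have h2 := (tendsto_trunc (iota α)).add h0
  rw [add_zero] at h2
  apply ge_of_tendsto' h2
  intro k
  have : α ≤ trunc (iota α) k + 1 / 10 ^ k := by
    rw [trunc_iota, ← add_div, le_div_iff₀ (by positivity)]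
    exact (Int.lt_floor_add_one _).le
  rw [← castR]
  exact Rat.cast_le.2 this

lemma val_sup (t : ℕ → ℚ) (ht : Monotone t) (v : ℝ)
    (hv : Tendsto (fun k => (t k : ℝ)) atTop (𝓝 v)) :
    val (sup {z | ∃ k, z = iota (t k)}) = v := by
  have htR : Monotone (fun k => (t k : ℝ)) := fun a b h => Rat.cast_le.2 (ht h)
  have hle : ∀ k, (t k : ℝ) ≤ v := fun k => htR.ge_of_tendsto hv k
  have hex : ∀ n : ℕ, ∃ T : ℤ, (∃ N, ∀ k ≥ N, ⌊t k * 10 ^ n⌋ = T) ∧ ∀ k, ⌊t k * 10 ^ n⌋ ≤ T := by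
    intro n
    have hm : Monotone (fun k => ⌊t k * 10 ^ n⌋) := by
      intro a b h
      have := ht h
      apply Int.floor_le_floor
      gcongr
    have hb : ∀ k, ⌊t k * 10 ^ n⌋ ≤ ⌊v * 10 ^ n⌋ := by
      intro k
      rw [Int.le_floor]
      have h1 : ((⌊t k * 10 ^ n⌋ : ℤ) : ℚ) ≤ t k * 10 ^ n := Int.floor_le _
      have h2 : ((⌊t k * 10 ^ n⌋ : ℤ) : ℝ) ≤ t k * 10 ^ n := by exact_mod_cast h1
      refine h2.trans ?_
      have := hle k
      gcongr
    obtain ⟨T, ⟨N, hN⟩, hT⟩ := Int.exists_greatest_of_bdd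
      (P := fun z => ∃ k, ⌊t k * 10 ^ n⌋ = z)
      ⟨⌊v * 10 ^ n⌋, by rintro z ⟨k, rfl⟩; exact hb k⟩ ⟨_, 0, rfl⟩
    refine ⟨T, ⟨N, fun k hk => le_antisymm (hT _ ⟨k, rfl⟩) (hN ▸ hm hk)⟩, fun k => hT _ ⟨k, rfl⟩⟩
  choose T hT hT' using hex
  have hstep : ∀ n, T (n + 1) / 10 = T n := by
    intro n
    obtain ⟨N, hN⟩ := hT n
    obtain ⟨N', hN'⟩ := hT (n + 1)
    rw [← hN (max N N') (le_max_left _ _), ← hN' (max N N') (le_max_right _ _)]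
    exact floor_step _ _
  have htr := trunc_mk' T hstep
  have hlub : IsLub {z | ∃ k, z = iota (t k)} (mk' T) := by
    constructor
    · rintro _ ⟨k, rfl⟩ n
      rw [htr, trunc_iota]
      have := hT' n k
      gcongr
    · intro M' hM' n
      obtain ⟨N, hN⟩ := hT n
      rw [htr, ← hN N le_rfl, ← trunc_iota]
      exact hM' _ ⟨N, rfl⟩ n
  have hvM : val (mk' T) = v := by
    apply le_antisymm
    · apply ciSup_le
      intro n
      obtain ⟨N, hN⟩ := hT n
      rw [htr, ← hN N le_rfl, ← trunc_iota]
      exact le_trans (by exact_mod_cast trunc_iota_le _ _) (hle N)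
    · apply le_of_tendsto' hv
      intro k
      exact (le_val_iota _).trans (val_mono (hlub.1 _ ⟨k, rfl⟩))
  have hE : ∃ M, IsLub {z | ∃ k, z = iota (t k)} M := ⟨_, hlub⟩
  have hs : IsLub {z | ∃ k, z = iota (t k)} (sup {z | ∃ k, z = iota (t k)}) := by
    unfold sup
    rw [dif_pos hE]
    exact hE.choose_spec
  rw [← hvM]
  exact le_antisymm (val_mono (hs.2 _ hlub.1)) (val_mono (hlub.2 _ hs.1))

lemma sign_norm (x : DecimalRep) :
    0 ≤ (norm x).1 ∧ (-1) ^ sign x * val (norm x) = val x := by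
  by_cases h : 0 ≤ x.1
  · have h1 : le (iota 0) x := by
      intro k
      have a := trunc_mono x (Nat.zero_le k)
      rw [trunc_zero] at a
      have b : (0 : ℚ) ≤ x.1 := by exact_mod_cast h
      exact (trunc_iota_le 0 k).trans (b.trans a)
    have h2 : ¬ le x (psi x) := by
      intro hc
      have a := hc 0
      rw [trunc_zero, trunc_zero] at a
      have a' : x.1 ≤ -1 - x.1 := by exact_mod_cast a
      omega
    simp [sign, norm, h1, h2, h]
  · have h1 : ¬ le (iota 0) x := by
      intro hc
      have a := hc 0
      rw [trunc_zero, trunc_zero] at a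
      apply h
      have : (iota 0).1 = 0 := by simp [iota]
      rw [this] at a
      exact_mod_cast a
    have h2 : le x (psi x) := by
      intro k
      have a := trunc_mono (psi x) (Nat.zero_le k)
      have b := trunc_lt x k 0
      rw [trunc_zero] at a b
      have c : (x.1 : ℚ) + 1 ≤ 0 := by exact_mod_cast (by omega : x.1 + 1 ≤ 0)
      have d : (((psi x).1 : ℤ) : ℚ) = -1 - x.1 := by simp [psi]
      rw [d] at a
      norm_num at b
      linarith
    refine ⟨?_, ?_⟩
    · rw [norm, if_pos h2]; simp only [psi]; omega
    · simp [sign, norm, h1, h2, val_psi]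

lemma val_mul (x y : DecimalRep) : val (mul x y) = val x * val y := by
  obtain ⟨hx, hx'⟩ := sign_norm x
  obtain ⟨hy, hy'⟩ := sign_norm y
  have nn : ∀ (a : DecimalRep), 0 ≤ a.1 → ∀ k, 0 ≤ trunc a k := by
    intro a ha k
    have h := trunc_mono a (Nat.zero_le k)
    rw [trunc_zero] at h
    exact le_trans (by exact_mod_cast ha) h
  have key := val_sup (fun k => trunc (norm x) k * trunc (norm y) k)
    (fun i j h => mul_le_mul (trunc_mono _ h) (trunc_mono _ h) (nn _ hy _) (nn _ hx _))
    (val (norm x) * val (norm y))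
    (by
      have := (tendsto_trunc (norm x)).mul (tendsto_trunc (norm y))
      simpa using this)
  unfold mul
  rw [val_psi_iter, key, ← hx', ← hy', pow_add]
  ring

end DecimalRep

open DecimalRep in
/-- Multiplication on `𝓡` is associative up to equivalence. -/
theorem mul_assoc_equiv (x y z : DecimalRep) :
    equiv (mul (mul x y) z) (mul x (mul y z)) := by
  apply equiv_of_val
  simp only [val_mul, mul_assoc]
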